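/- Let f : (C₁, δ₁, β₁) → (C₂, δ₂, β₂) be a morphism of mixed complexes over κ. If the induced map H^n(f) : H^n(C₁, δ₁) → H^n(C₂, δ₂) is an isomorphism for every n, then the induced maps ^+H^r_β(f) : ^+H^r_β(C₁) → ^+H^r_β(C₂) and PH^r(f) : PH^r(C₁) → PH^r(C₂) are isomorphisms for every r. -/

import Mathlib

open LinearMap DirectSum

namespace CDGA

variable {κ : Type} [Field κ]

/-- Cast along an equality of indices. -/
def fcast {ι : Type} {C : ι → Type} [∀ i, AddCommGroup (C i)] [∀ i, Module κ (C i)]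
    {m n : ι} (h : m = n) : C m →ₗ[κ] C n := by subst h; exact LinearMap.id

section CohomologyDefs

variable {C : ℤ → Type} [∀ n, AddCommGroup (C n)] [∀ n, Module κ (C n)]

/-- Cocycles of a cochain complex. -/
def cocycles (d : ∀ n : ℤ, C n →ₗ[κ] C (n + 1)) (r : ℤ) : Submodule κ (C r) :=
  LinearMap.ker (d r)

/-- Coboundaries of a cochain complex. -/
def cobound (d : ∀ n : ℤ, C n →ₗ[κ] C (n + 1)) (r : ℤ) : Submodule κ (C r) :=
  LinearMap.range ((fcast (show r - 1 + 1 = r by ring)).comp (d (r - 1)))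

/-- Cohomology of a cochain complex in degree `r`. -/
abbrev cohomology (d : ∀ n : ℤ, C n →ₗ[κ] C (n + 1)) (r : ℤ) : Type :=
  ↥(cocycles d r) ⧸ (cobound d r).comap (cocycles d r).subtype

/-- Cycles of a chain complex (degree `-1` differential). -/
def bcycles (d : ∀ n : ℤ, C n →ₗ[κ] C (n - 1)) (r : ℤ) : Submodule κ (C r) :=
  LinearMap.ker (d r)

/-- Boundaries of a chain complex. -/
def bbound (d : ∀ n : ℤ, C n →ₗ[κ] C (n - 1)) (r : ℤ) : Submodule κ (C r) :=
  LinearMap.range ((fcast (show r + 1 - 1 = r by ring)).comp (d (r + 1)))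

/-- Homology of a chain complex in degree `r`. -/
abbrev homologyC (d : ∀ n : ℤ, C n →ₗ[κ] C (n - 1)) (r : ℤ) : Type :=
  ↥(bcycles d r) ⧸ (bbound d r).comap (bcycles d r).subtype

end CohomologyDefs

section InducedMaps

variable {C₁ C₂ : ℤ → Type}
  [∀ n, AddCommGroup (C₁ n)] [∀ n, Module κ (C₁ n)]
  [∀ n, AddCommGroup (C₂ n)] [∀ n, Module κ (C₂ n)]

open Classical in
/-- The map induced on cohomology by a linear map `g` from the degree-`a` part of the first
complex to the degree-`b` part of the second complex.  (If `g` is not compatible with the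
differentials, this is the junk value `0`.) -/
noncomputable def Hmap₂ (d₁ : ∀ n : ℤ, C₁ n →ₗ[κ] C₁ (n + 1)) (d₂ : ∀ n : ℤ, C₂ n →ₗ[κ] C₂ (n + 1))
    (a b : ℤ) (g : C₁ a →ₗ[κ] C₂ b) : cohomology d₁ a →ₗ[κ] cohomology d₂ b :=
  if h : cocycles d₁ a ≤ (cocycles d₂ b).comap g ∧ cobound d₁ a ≤ (cobound d₂ b).comap g then
    Submodule.mapQ _ _ (g.restrict fun x hx => h.1 hx)
      (fun x hx => by
        have hg : g ↑x ∈ cobound d₂ b := h.2 hx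
        simpa [Submodule.mem_comap, LinearMap.restrict_apply] using hg)
  else 0

open Classical in
/-- The map induced on homology by a linear map `g` from the degree-`a` part of the first
chain complex to the degree-`b` part of the second chain complex.  (Junk value `0` if `g` is
not compatible with the differentials.) -/
noncomputable def hMap₂ (d₁ : ∀ n : ℤ, C₁ n →ₗ[κ] C₁ (n - 1)) (d₂ : ∀ n : ℤ, C₂ n →ₗ[κ] C₂ (n - 1))
    (a b : ℤ) (g : C₁ a →ₗ[κ] C₂ b) : homologyC d₁ a →ₗ[κ] homologyC d₂ b :=
  if h : bcycles d₁ a ≤ (bcycles d₂ b).comap g ∧ bbound d₁ a ≤ (bbound d₂ b).comap g then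
    Submodule.mapQ _ _ (g.restrict fun x hx => h.1 hx)
      (fun x hx => by
        have hg : g ↑x ∈ bbound d₂ b := h.2 hx
        simpa [Submodule.mem_comap, LinearMap.restrict_apply] using hg)
  else 0

end InducedMaps

/-- A mixed complex over `κ`: non-negatively graded vector spaces with a degree `+1`
exterior differential `δ` and a degree `-1` interior differential `β` satisfying
`δδ = 0`, `ββ = 0` and `βδ + δβ = 0`. -/
structure Mixed (κ : Type) [Field κ] : Type 1 where
  C : ℤ → Type
  [acg : ∀ n, AddCommGroup (C n)]
  [mod : ∀ n, Module κ (C n)]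
  trivNeg : ∀ n : ℤ, n < 0 → Subsingleton (C n)
  δ : ∀ n : ℤ, C n →ₗ[κ] C (n + 1)
  β : ∀ n : ℤ, C n →ₗ[κ] C (n - 1)
  δδ : ∀ (n : ℤ) (x : C n), δ (n + 1) (δ n x) = 0
  ββ : ∀ (n : ℤ) (x : C n), β (n - 1) (β n x) = 0
  βδ : ∀ (n : ℤ) (x : C n),
    fcast (κ := κ) (show n + 1 - 1 = n by ring) (β (n + 1) (δ n x))
      + fcast (κ := κ) (show n - 1 + 1 = n by ring) (δ (n - 1) (β n x)) = 0

attribute [instance] Mixed.acg Mixed.mod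

/-- `^+C^r := ∏_{k ≥ 0} C^{r-2k}`. -/
abbrev plusC (M : Mixed κ) (r : ℤ) : Type := ∀ k : ℕ, M.C (r - 2 * (k : ℤ))

/-- `^-C^r := ∏_{k ≥ 0} C^{r+2k}`. -/
abbrev minusC (M : Mixed κ) (r : ℤ) : Type := ∀ k : ℕ, M.C (r + 2 * (k : ℤ))

/-- `𝕡C^r := ∏_{m ≡ r mod 2} C^m` (the components with `m < 0` are trivial). -/
abbrev pprodC (M : Mixed κ) (r : ℤ) : Type := ∀ n : {m : ℤ // m % 2 = r % 2}, M.C n.1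

/-- `PC^r := ⊕_{m ≡ r mod 2} C^m` (the components with `m < 0` are trivial). -/
abbrev pC (M : Mixed κ) (r : ℤ) : Type := ⨁ n : {m : ℤ // m % 2 = r % 2}, M.C n.1

/-- Components of the differential `^+D_β`. -/
def plusDComp (M : Mixed κ) (r : ℤ) : ∀ k : ℕ, plusC M r →ₗ[κ] M.C (r + 1 - 2 * (k : ℤ))
  | 0 =>
      (fcast (show r - 2 * ((0:ℕ) : ℤ) + 1 = r + 1 - 2 * ((0:ℕ) : ℤ) by push_cast; ring)).comp
        ((M.δ (r - 2 * ((0:ℕ) : ℤ))).comp (LinearMap.proj 0))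
  | (k + 1) =>
      (fcast (show r - 2 * ((k + 1 : ℕ) : ℤ) + 1 = r + 1 - 2 * ((k + 1 : ℕ) : ℤ) by push_cast; ring)).comp
        ((M.δ (r - 2 * ((k + 1 : ℕ) : ℤ))).comp (LinearMap.proj (k + 1)))
      + (fcast (show r - 2 * ((k : ℕ) : ℤ) - 1 = r + 1 - 2 * ((k + 1 : ℕ) : ℤ) by push_cast; ring)).comp
        ((M.β (r - 2 * ((k : ℕ) : ℤ))).comp (LinearMap.proj k))

/-- The differential of the cochain complex `^+C_β`. -/
def plusD (M : Mixed κ) (r : ℤ) : plusC M r →ₗ[κ] plusC M (r + 1) :=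
  LinearMap.pi (plusDComp M r)

/-- The differential of the chain complex `(^+C, ^+D^δ)`. -/
def plusDelta (M : Mixed κ) (r : ℤ) : plusC M r →ₗ[κ] plusC M (r - 1) :=
  LinearMap.pi fun k : ℕ =>
    (fcast (show r - 2 * ((k : ℕ) : ℤ) - 1 = r - 1 - 2 * ((k : ℕ) : ℤ) by ring)).comp
      ((M.β (r - 2 * ((k : ℕ) : ℤ))).comp (LinearMap.proj k))
    + (fcast (show r - 2 * ((k + 1 : ℕ) : ℤ) + 1 = r - 1 - 2 * ((k : ℕ) : ℤ) by push_cast; ring)).comp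
      ((M.δ (r - 2 * ((k + 1 : ℕ) : ℤ))).comp (LinearMap.proj (k + 1)))

/-- The differential of the cochain complex `^-C_β`. -/
def minusD (M : Mixed κ) (r : ℤ) : minusC M r →ₗ[κ] minusC M (r + 1) :=
  LinearMap.pi fun k : ℕ =>
    (fcast (show r + 2 * ((k + 1 : ℕ) : ℤ) - 1 = r + 1 + 2 * ((k : ℕ) : ℤ) by push_cast; ring)).comp
      ((M.β (r + 2 * ((k + 1 : ℕ) : ℤ))).comp (LinearMap.proj (k + 1)))
    + (fcast (show r + 2 * ((k : ℕ) : ℤ) + 1 = r + 1 + 2 * ((k : ℕ) : ℤ) by ring)).comp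
      ((M.δ (r + 2 * ((k : ℕ) : ℤ))).comp (LinearMap.proj k))

/-- The differential of the `2`-periodic cochain complex `𝕡C`. -/
def pprodD (M : Mixed κ) (r : ℤ) : pprodC M r →ₗ[κ] pprodC M (r + 1) :=
  LinearMap.pi fun n : {m : ℤ // m % 2 = (r + 1) % 2} =>
    (fcast (show n.1 - 1 + 1 = n.1 by ring)).comp
      ((M.δ (n.1 - 1)).comp
        (LinearMap.proj (⟨n.1 - 1, by have := n.2; omega⟩ : {m : ℤ // m % 2 = r % 2})))
    + (fcast (show n.1 + 1 - 1 = n.1 by ring)).comp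
      ((M.β (n.1 + 1)).comp
        (LinearMap.proj (⟨n.1 + 1, by have := n.2; omega⟩ : {m : ℤ // m % 2 = r % 2})))

/-- The differential of the `2`-periodic cochain complex `PC` (direct sum version). -/
noncomputable def pD (M : Mixed κ) (r : ℤ) : pC M r →ₗ[κ] pC M (r + 1) :=
  DirectSum.toModule κ {m : ℤ // m % 2 = r % 2} (pC M (r + 1)) fun n =>
    ((DirectSum.lof κ {m : ℤ // m % 2 = (r + 1) % 2} (fun m => M.C m.1)
        ⟨n.1 + 1, by have := n.2; omega⟩).comp (M.δ n.1))
    + ((DirectSum.lof κ {m : ℤ // m % 2 = (r + 1) % 2} (fun m => M.C m.1)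
        ⟨n.1 - 1, by have := n.2; omega⟩).comp (M.β n.1))

end CDGA

namespace CDGA

variable {κ : Type} [Field κ]

section MorphismInduced

variable {M₁ M₂ : Mixed κ}

/-- The map induced by a morphism of mixed complexes on `^+C`. -/
def plusMap (f : ∀ n : ℤ, M₁.C n →ₗ[κ] M₂.C n) (r : ℤ) : plusC M₁ r →ₗ[κ] plusC M₂ r :=
  LinearMap.pi fun k : ℕ => (f (r - 2 * (k : ℤ))).comp (LinearMap.proj k)

/-- The map induced by a morphism of mixed complexes on `^-C`. -/
def minusMap (f : ∀ n : ℤ, M₁.C n →ₗ[κ] M₂.C n) (r : ℤ) : minusC M₁ r →ₗ[κ] minusC M₂ r :=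
  LinearMap.pi fun k : ℕ => (f (r + 2 * (k : ℤ))).comp (LinearMap.proj k)

/-- The map induced by a morphism of mixed complexes on `𝕡C`. -/
def pprodMap (f : ∀ n : ℤ, M₁.C n →ₗ[κ] M₂.C n) (r : ℤ) : pprodC M₁ r →ₗ[κ] pprodC M₂ r :=
  LinearMap.pi fun n : {m : ℤ // m % 2 = r % 2} => (f n.1).comp (LinearMap.proj n)

/-- The map induced by a morphism of mixed complexes on `PC`. -/
noncomputable def pMap (f : ∀ n : ℤ, M₁.C n →ₗ[κ] M₂.C n) (r : ℤ) : pC M₁ r →ₗ[κ] pC M₂ r :=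
  DirectSum.toModule κ {m : ℤ // m % 2 = r % 2} (pC M₂ r) fun n =>
    (DirectSum.lof κ {m : ℤ // m % 2 = r % 2} (fun m => M₂.C m.1) n).comp (f n.1)

end MorphismInduced

/-- Components of the canonical inclusion `^+C^a → ^+C^{a+2} = ^+C^b`,
`(ω_a, ω_{a-2}, …) ↦ (0, ω_a, ω_{a-2}, …)`. -/
def inclS2Comp (M : Mixed κ) (a b : ℤ) (h : a + 2 = b) :
    ∀ k : ℕ, plusC M a →ₗ[κ] M.C (b - 2 * (k : ℤ))
  | 0 => 0
  | (j + 1) =>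
      (fcast (show a - 2 * ((j : ℕ) : ℤ) = b - 2 * ((j + 1 : ℕ) : ℤ) by push_cast; omega)).comp
        (LinearMap.proj j)

/-- The canonical inclusion `i : ^+C^a → ^+C^b` (for `b = a + 2`). -/
def inclS2 (M : Mixed κ) (a b : ℤ) (h : a + 2 = b) : plusC M a →ₗ[κ] plusC M b :=
  LinearMap.pi (inclS2Comp M a b h)

/-- The projection `π : ^+C^r → C^r` onto the top component. -/
def topProj (M : Mixed κ) (r : ℤ) : plusC M r →ₗ[κ] M.C r :=
  (fcast (show r - 2 * ((0:ℕ) : ℤ) = r by push_cast; ring)).comp (LinearMap.proj 0)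

/-- The canonical projection `^+C^a → ^+C^{a-2} = ^+C^b` dropping the top component. -/
def projS2 (M : Mixed κ) (a b : ℤ) (h : b + 2 = a) : plusC M a →ₗ[κ] plusC M b :=
  LinearMap.pi fun k : ℕ =>
    (fcast (show a - 2 * ((k + 1 : ℕ) : ℤ) = b - 2 * ((k : ℕ) : ℤ) by push_cast; omega)).comp
      (LinearMap.proj (k + 1))

/-- The canonical inclusion `I : ^+C^{r-2} → 𝕡C^r` (placing the component of
degree `r - 2 - 2j` in degree `r - 2 - 2j`). -/
def inclPprod (M : Mixed κ) (r : ℤ) : plusC M (r - 2) →ₗ[κ] pprodC M r :=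
  LinearMap.pi fun n : {m : ℤ // m % 2 = r % 2} =>
    if h : n.1 ≤ r - 2 then
      (fcast (show r - 2 - 2 * ((((r - 2 - n.1) / 2).toNat : ℕ) : ℤ) = n.1 by
          have := n.2; omega)).comp
        (LinearMap.proj (((r - 2 - n.1) / 2).toNat))
    else 0

/-- The canonical projection `p : 𝕡C^r → ^-C^r` onto the components of degree `≥ r`. -/
def projMinus (M : Mixed κ) (r : ℤ) : pprodC M r →ₗ[κ] minusC M r :=
  LinearMap.pi fun j : ℕ =>
    LinearMap.proj (⟨r + 2 * (j : ℤ), by omega⟩ : {m : ℤ // m % 2 = r % 2})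

/-- Reindexing (periodicity) isomorphism between the `2`-periodic complexes `PC^a` and
`PC^b` for `a ≡ b mod 2`. -/
noncomputable def reindexP (M : Mixed κ) (a b : ℤ) (h : a % 2 = b % 2) :
    pC M a →ₗ[κ] pC M b :=
  DirectSum.toModule κ {m : ℤ // m % 2 = a % 2} (pC M b) fun n =>
    DirectSum.lof κ {m : ℤ // m % 2 = b % 2} (fun m => M.C m.1) ⟨n.1, by have := n.2; omega⟩

/-- The canonical map `^+C^m → PC^m` (the components of negative degree are trivial and
are sent to `0`). -/
noncomputable def inclPlusP (M : Mixed κ) (m : ℤ) : plusC M m →ₗ[κ] pC M m :=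
  ∑ j ∈ Finset.range (m.toNat + 1),
    (DirectSum.lof κ {x : ℤ // x % 2 = m % 2} (fun x => M.C x.1)
        ⟨m - 2 * (j : ℤ), by omega⟩).comp
      (LinearMap.proj j)

section Psi

variable (M : Mixed κ) (Ψ : ℤ → ∀ n : ℤ, M.C n →ₗ[κ] M.C n)

/-- The endomorphism `^+Ψ_k` of `^+C^r`: the component of degree `r - 2j` is scaled
by `k^{-j}`. -/
noncomputable def plusPsi (k : ℤ) (r : ℤ) : plusC M r →ₗ[κ] plusC M r :=
  LinearMap.pi fun j : ℕ =>
    (((k : κ)⁻¹) ^ (j : ℕ)) • ((Ψ k (r - 2 * (j : ℤ))).comp (LinearMap.proj j))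

/-- The endomorphism `^-Ψ_k` of `^-C^r`: the component of degree `r + 2j` is scaled
by `k^j`. -/
noncomputable def minusPsi (k : ℤ) (r : ℤ) : minusC M r →ₗ[κ] minusC M r :=
  LinearMap.pi fun j : ℕ =>
    ((k : κ) ^ (j : ℕ)) • ((Ψ k (r + 2 * (j : ℤ))).comp (LinearMap.proj j))

/-- The endomorphism `𝕡Ψ_k` of `𝕡C^r`: the component of degree `r + 2j` (`j ∈ ℤ`) is
scaled by `k^j`. -/
noncomputable def pprodPsi (k : ℤ) (r : ℤ) : pprodC M r →ₗ[κ] pprodC M r :=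
  LinearMap.pi fun n : {m : ℤ // m % 2 = r % 2} =>
    ((k : κ) ^ ((n.1 - r) / 2)) • ((Ψ k n.1).comp (LinearMap.proj n))

end Psi

/-- The map `Φ((a_k)_k) = (a_k - S_k(a_{k+1}))_k` associated to an inverse system
of vector spaces; its kernel is `lim` and its cokernel is `lim¹`. -/
def phiMap {A : ℕ → Type} [∀ i, AddCommGroup (A i)] [∀ i, Module κ (A i)]
    (S : ∀ i : ℕ, A (i + 1) →ₗ[κ] A i) : (∀ i, A i) →ₗ[κ] (∀ i, A i) :=
  LinearMap.pi fun i : ℕ => LinearMap.proj i - (S i).comp (LinearMap.proj (i + 1))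

end CDGA

namespace CDGA

/-!
A morphism is a quasi-isomorphism exactly when its mapping cone is exact, so it suffices to pass
exactness of the cone from `C` to `^+C` and `PC`. For `^+C`, the short exact sequences
`0 → ^+C^{r-2} → ^+C^r → C^r → 0` reduce degree `r` to degree `r - 2`, and `^+C^r = 0` for `r < 0`.
For `PC`, each element has finite support and so comes from some `^+C^m` with `m ≡ r` modulo `2`;
thus `PC` is a directed union of copies of `^+C` and inherits exactness of the cone.
-/

section Cohomology

variable {κ : Type} [Field κ] {C₁ C₂ : ℤ → Type}
  [∀ n, AddCommGroup (C₁ n)] [∀ n, Module κ (C₁ n)]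
  [∀ n, AddCommGroup (C₂ n)] [∀ n, Module κ (C₂ n)]
  {d₁ : ∀ n : ℤ, C₁ n →ₗ[κ] C₁ (n + 1)} {d₂ : ∀ n : ℤ, C₂ n →ₗ[κ] C₂ (n + 1)}
  {g : ∀ n : ℤ, C₁ n →ₗ[κ] C₂ n}

lemma cobound_succ (d : ∀ n : ℤ, C₁ n →ₗ[κ] C₁ (n + 1)) (n : ℤ) :
    cobound d (n + 1) = LinearMap.range (d n) := by
  have range_fcast_comp : ∀ (m : ℤ) (h : m = n),
      LinearMap.range ((fcast (congrArg (· + 1) h)).comp (d m)) = LinearMap.range (d n) := by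
    rintro m rfl
    rfl
  exact range_fcast_comp _ (by ring)

lemma map_cocycles_le (hg : ∀ n x, d₂ n (g n x) = g (n + 1) (d₁ n x)) (n : ℤ) :
    cocycles d₁ n ≤ (cocycles d₂ n).comap (g n) := fun x (hx : d₁ n x = 0) =>
  show d₂ n (g n x) = 0 by rw [hg, hx, map_zero]

lemma map_cobound_le (hg : ∀ n x, d₂ n (g n x) = g (n + 1) (d₁ n x)) (n : ℤ) :
    cobound d₁ n ≤ (cobound d₂ n).comap (g n) := by
  obtain ⟨m, rfl⟩ : ∃ m, n = m + 1 := ⟨n - 1, by ring⟩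
  rw [cobound_succ, cobound_succ]
  rintro _ ⟨z, rfl⟩
  exact ⟨g m z, hg m z⟩

lemma Hmap₂_mk (hg : ∀ n x, d₂ n (g n x) = g (n + 1) (d₁ n x)) (n : ℤ) (x : cocycles d₁ n) :
    Hmap₂ d₁ d₂ n n (g n) (Submodule.Quotient.mk x) =
      Submodule.Quotient.mk ⟨g n x, map_cocycles_le hg n x.2⟩ := by
  rw [Hmap₂, dif_pos ⟨map_cocycles_le hg n, map_cobound_le hg n⟩, Submodule.mapQ_apply]
  rfl

lemma Hmap₂_injective_iff (hg : ∀ n x, d₂ n (g n x) = g (n + 1) (d₁ n x)) (n : ℤ) :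
    Function.Injective (Hmap₂ d₁ d₂ n n (g n)) ↔
      ∀ x, d₁ n x = 0 → g n x ∈ cobound d₂ n → x ∈ cobound d₁ n := by
  rw [injective_iff_map_eq_zero, (Submodule.Quotient.mk_surjective _).forall, Subtype.forall]
  refine forall₂_congr fun x hx => ?_
  rw [Hmap₂_mk hg, Submodule.Quotient.mk_eq_zero, Submodule.Quotient.mk_eq_zero]
  rfl

lemma Hmap₂_surjective_iff (hg : ∀ n x, d₂ n (g n x) = g (n + 1) (d₁ n x)) (n : ℤ) :
    Function.Surjective (Hmap₂ d₁ d₂ n n (g n)) ↔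
      ∀ y, d₂ n y = 0 → ∃ x, d₁ n x = 0 ∧ y - g n x ∈ cobound d₂ n := by
  rw [Function.Surjective, (Submodule.Quotient.mk_surjective _).forall, Subtype.forall]
  refine forall₂_congr fun y hy => ?_
  rw [(Submodule.Quotient.mk_surjective _).exists, Subtype.exists]
  refine exists_congr fun x => ?_
  rw [← exists_prop]
  refine exists_congr fun hx => ?_
  rw [Hmap₂_mk hg, eq_comm, Submodule.Quotient.eq]
  rfl

/-- Exactness of the mapping cone of `g : (C₁, d₁) → (C₂, d₂)` at `C₁^{n+2} ⊕ C₂^{n+1}`, where the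
cone differential is `(x, y) ↦ (d₁ x, g x - d₂ y)`. Starting from degree `n` rather than
`n - 1` lets all three differentials be used without casts. -/
def ConeExactAt (d₁ : ∀ n : ℤ, C₁ n →ₗ[κ] C₁ (n + 1)) (d₂ : ∀ n : ℤ, C₂ n →ₗ[κ] C₂ (n + 1))
    (g : ∀ n : ℤ, C₁ n →ₗ[κ] C₂ n) (n : ℤ) : Prop :=
  ∀ (x : C₁ (n + 1 + 1)) (y : C₂ (n + 1)), d₁ (n + 1 + 1) x = 0 →
    g (n + 1 + 1) x = d₂ (n + 1) y →
      ∃ (x' : C₁ (n + 1)) (y' : C₂ n), d₁ (n + 1) x' = x ∧ g (n + 1) x' + d₂ n y' = y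

theorem forall_bijective_Hmap₂_iff (hg : ∀ n x, d₂ n (g n x) = g (n + 1) (d₁ n x)) :
    (∀ n, Function.Bijective (Hmap₂ d₁ d₂ n n (g n))) ↔ ∀ n, ConeExactAt d₁ d₂ g n := by
  simp only [Function.Bijective, Hmap₂_injective_iff hg, Hmap₂_surjective_iff hg]
  constructor
  · intro h n x y hx hxy
    have x_mem := (h (n + 1 + 1)).1 x hx
    rw [cobound_succ, cobound_succ] at x_mem
    obtain ⟨x₀, rfl⟩ := x_mem ⟨y, hxy.symm⟩
    obtain ⟨x₁, hx₁, hy⟩ := (h (n + 1)).2 (y - g (n + 1) x₀) (by rw [map_sub, hg, hxy, sub_self])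
    rw [cobound_succ] at hy
    obtain ⟨y', hy'⟩ := hy
    exact ⟨x₀ + x₁, y', by rw [map_add, hx₁, add_zero], by rw [map_add, hy']; abel⟩
  · intro h r
    obtain ⟨n, rfl⟩ : ∃ n, r = n + 1 + 1 := ⟨r - 2, by ring⟩
    simp only [cobound_succ]
    constructor
    · rintro x hx ⟨y, hy⟩
      obtain ⟨x', -, hx', -⟩ := h n x y hx hy.symm
      exact ⟨x', hx'⟩
    · intro y hy
      obtain ⟨x, y', hx, rfl⟩ := h (n + 1) 0 y (map_zero _) (by rw [map_zero, hy])
      exact ⟨x, hx, y', (add_sub_cancel_left _ _).symm⟩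

end Cohomology

section Fcast

variable {κ : Type} [Field κ] {ι : Type} {C C' : ι → Type}
  [∀ i, AddCommGroup (C i)] [∀ i, Module κ (C i)]
  [∀ i, AddCommGroup (C' i)] [∀ i, Module κ (C' i)]

lemma fcast_fcast {l m n : ι} (h : l = m) (h' : m = n) (x : C l) :
    fcast (κ := κ) h' (fcast (κ := κ) h x) = fcast (κ := κ) (h.trans h') x := by
  subst h h'
  rfl

lemma fcast_injective {m n : ι} (h : m = n) :
    Function.Injective (fcast (κ := κ) (C := C) h) := by
  subst h
  exact Function.injective_id

lemma fcast_surjective {m n : ι} (h : m = n) :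
    Function.Surjective (fcast (κ := κ) (C := C) h) := by
  subst h
  exact Function.surjective_id

lemma map_fcast (f : ∀ i, C i →ₗ[κ] C' i) {m n : ι} (h : m = n) (x : C m) :
    f n (fcast (κ := κ) h x) = fcast (κ := κ) h (f m x) := by
  subst h
  rfl

lemma δ_fcast (M : Mixed κ) {m n : ℤ} (h : m = n) (x : M.C m) :
    M.δ n (fcast (κ := κ) h x) = fcast (κ := κ) (congrArg (· + 1) h) (M.δ m x) := by
  subst h
  rfl

lemma β_fcast (M : Mixed κ) {m n : ℤ} (h : m = n) (x : M.C m) :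
    M.β n (fcast (κ := κ) h x) = fcast (κ := κ) (congrArg (· - 1) h) (M.β m x) := by
  subst h
  rfl

end Fcast

section Plus

variable {κ : Type} [Field κ]

lemma plusD_apply_zero (M : Mixed κ) (r : ℤ) (w : plusC M r) :
    plusD M r w 0 = fcast (κ := κ) (by ring) (M.δ _ (w 0)) := rfl

lemma plusD_apply_succ (M : Mixed κ) (r : ℤ) (w : plusC M r) (k : ℕ) :
    plusD M r w (k + 1) = fcast (κ := κ) (by ring) (M.δ _ (w (k + 1))) +
      fcast (κ := κ) (by push_cast; ring) (M.β _ (w k)) := rfl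

lemma fcast_δβ_add_fcast_βδ (M : Mixed κ) {m n : ℤ} (h : m - 1 + 1 = n) (h' : m + 1 - 1 = n)
    (x : M.C m) :
    fcast (κ := κ) h (M.δ (m - 1) (M.β m x)) + fcast (κ := κ) h' (M.β (m + 1) (M.δ m x)) = 0 := by
  obtain rfl : m = n := by omega
  rw [add_comm]
  exact M.βδ m x

lemma plusD_plusD (M : Mixed κ) (r : ℤ) (w : plusC M r) : plusD M (r + 1) (plusD M r w) = 0 := by
  funext k
  match k with
  | 0 => simp only [plusD_apply_zero, δ_fcast, M.δδ, map_zero, Pi.zero_apply]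
  | 1 =>
    rw [plusD_apply_succ, plusD_apply_succ, plusD_apply_zero]
    simp only [map_add, δ_fcast, β_fcast, M.δδ, fcast_fcast, map_zero, zero_add, Pi.zero_apply]
    exact fcast_δβ_add_fcast_βδ M _ _ _
  | k + 2 =>
    simp only [plusD_apply_succ, map_add, δ_fcast, β_fcast, M.δδ, M.ββ, fcast_fcast, map_zero,
      zero_add, add_zero, Pi.zero_apply]
    exact fcast_δβ_add_fcast_βδ M _ _ _

lemma inclS2_apply_zero (M : Mixed κ) {a b : ℤ} (h : a + 2 = b) (w : plusC M a) :
    inclS2 M a b h w 0 = 0 := rfl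

lemma inclS2_apply_succ (M : Mixed κ) {a b : ℤ} (h : a + 2 = b) (w : plusC M a) (k : ℕ) :
    inclS2 M a b h w (k + 1) = fcast (κ := κ) (by push_cast; omega) (w k) := rfl

lemma plusD_inclS2 (M : Mixed κ) {a b : ℤ} (h : a + 2 = b) (w : plusC M a) :
    plusD M b (inclS2 M a b h w) = inclS2 M (a + 1) (b + 1) (by omega) (plusD M a w) := by
  funext k
  match k with
  | 0 => rw [plusD_apply_zero, inclS2_apply_zero, inclS2_apply_zero, map_zero, map_zero]
  | 1 =>
    rw [plusD_apply_succ, inclS2_apply_succ, inclS2_apply_succ, inclS2_apply_zero,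
      plusD_apply_zero, δ_fcast, fcast_fcast, fcast_fcast, map_zero, map_zero, add_zero]
  | k + 2 =>
    simp only [plusD_apply_succ, inclS2_apply_succ, map_add, δ_fcast, β_fcast, fcast_fcast]

lemma inclS2_injective (M : Mixed κ) {a b : ℤ} (h : a + 2 = b) :
    Function.Injective (inclS2 M a b h) := fun _ _ hvw =>
  funext fun k => fcast_injective _ (congrFun hvw (k + 1))

lemma topProj_surjective (M : Mixed κ) (r : ℤ) : Function.Surjective (topProj M r) :=
  (fcast_surjective _).comp (Function.surjective_eval 0)

lemma exists_inclS2_eq_of_topProj_eq_zero (M : Mixed κ) {a b : ℤ} (h : a + 2 = b)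
    {w : plusC M b} (hw : topProj M b w = 0) : ∃ v, inclS2 M a b h v = w := by
  refine ⟨fun k => fcast (κ := κ) (by push_cast; omega) (w (k + 1)), funext fun k => ?_⟩
  match k with
  | 0 => exact (fcast_injective _ (hw.trans (map_zero _).symm)).symm
  | k + 1 => exact fcast_fcast _ _ _

lemma topProj_plusD (M : Mixed κ) (r : ℤ) (w : plusC M r) :
    topProj M (r + 1) (plusD M r w) = M.δ r (topProj M r w) := by
  change fcast (κ := κ) _ (fcast (κ := κ) _ (M.δ _ (w 0))) = M.δ r (fcast (κ := κ) _ (w 0))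
  rw [fcast_fcast, δ_fcast]

lemma subsingleton_plusC_of_neg (M : Mixed κ) {r : ℤ} (hr : r < 0) : Subsingleton (plusC M r) :=
  @Pi.instSubsingleton _ _ fun _ => M.trivNeg _ (by omega)

variable {M₁ M₂ : Mixed κ} {f : ∀ n : ℤ, M₁.C n →ₗ[κ] M₂.C n}

lemma plusMap_inclS2 {a b : ℤ} (h : a + 2 = b) (w : plusC M₁ a) :
    plusMap f b (inclS2 M₁ a b h w) = inclS2 M₂ a b h (plusMap f a w) := by
  funext k
  match k with
  | 0 => exact map_zero (f _)
  | k + 1 => exact map_fcast f _ _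

lemma topProj_plusMap (r : ℤ) (w : plusC M₁ r) :
    topProj M₂ r (plusMap f r w) = f r (topProj M₁ r w) :=
  (map_fcast f _ _).symm

/-- A morphism of mixed complexes: a degree-preserving family of linear maps that commutes with
both differentials. -/
structure IsMixedHom (f : ∀ n : ℤ, M₁.C n →ₗ[κ] M₂.C n) : Prop where
  map_δ : ∀ (n : ℤ) (x : M₁.C n), M₂.δ n (f n x) = f (n + 1) (M₁.δ n x)
  map_β : ∀ (n : ℤ) (x : M₁.C n), M₂.β n (f n x) = f (n - 1) (M₁.β n x)

lemma plusD_plusMap (hf : IsMixedHom f) (r : ℤ) (w : plusC M₁ r) :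
    plusD M₂ r (plusMap f r w) = plusMap f (r + 1) (plusD M₁ r w) := by
  funext k
  change plusD M₂ r (fun k => f _ (w k)) k = f _ (plusD M₁ r w k)
  cases k with
  | zero => simp only [plusD_apply_zero, hf.map_δ, map_fcast]
  | succ k => simp only [plusD_apply_succ, hf.map_δ, hf.map_β, map_add, map_fcast]

/-- In the long exact sequence of the mapping cones of `0 → ^+C^a → ^+C^b → C^b → 0`, the middle
term vanishes because its two neighbours do. -/
lemma coneExactAt_plusMap_of_add_two (hf : IsMixedHom f) {a b : ℤ}
    (hab : a + 2 = b) (htop : ConeExactAt M₁.δ M₂.δ f b)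
    (hsub : ConeExactAt (plusD M₁) (plusD M₂) (plusMap f) a) :
    ConeExactAt (plusD M₁) (plusD M₂) (plusMap f) b := by
  intro x y hx hxy
  obtain ⟨u, v, hu, hv⟩ := htop (topProj M₁ _ x) (topProj M₂ _ y)
    (by rw [← topProj_plusD, hx, map_zero])
    (by rw [← topProj_plusMap, hxy, topProj_plusD])
  obtain ⟨u, rfl⟩ := topProj_surjective M₁ _ u
  obtain ⟨v, rfl⟩ := topProj_surjective M₂ _ v
  obtain ⟨x₀, hx₀⟩ := exists_inclS2_eq_of_topProj_eq_zero M₁ (a := a + 1 + 1) (by omega)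
    (w := x - plusD M₁ _ u) (by rw [map_sub, topProj_plusD, hu, sub_self])
  obtain ⟨y₀, hy₀⟩ := exists_inclS2_eq_of_topProj_eq_zero M₂ (a := a + 1) (by omega)
    (w := y - (plusMap f _ u + plusD M₂ _ v))
    (by rw [map_sub, map_add, topProj_plusMap, topProj_plusD, hv, sub_self])
  have plusD_x₀ : plusD M₁ _ x₀ = 0 := by
    apply inclS2_injective M₁ (b := b + 1 + 1 + 1) (by omega)
    rw [← plusD_inclS2 M₁ (by omega), hx₀, map_sub, hx, plusD_plusD, sub_zero, map_zero]
  have plusMap_x₀ : plusMap f _ x₀ = plusD M₂ _ y₀ := by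
    apply inclS2_injective M₂ (b := b + 1 + 1) (by omega)
    rw [← plusMap_inclS2, hx₀, ← plusD_inclS2 M₂ (by omega), hy₀, map_sub, map_sub, map_add, hxy,
      plusD_plusMap hf, plusD_plusD, add_zero]
  obtain ⟨x', y', rfl, rfl⟩ := hsub x₀ y₀ plusD_x₀ plusMap_x₀
  refine ⟨u + inclS2 M₁ _ _ (by omega) x', v + inclS2 M₂ _ _ hab y', ?_, ?_⟩
  · rw [map_add, plusD_inclS2, hx₀, add_sub_cancel]
  · rw [map_add, map_add, plusMap_inclS2, plusD_inclS2, add_add_add_comm, ← map_add, hy₀,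
      add_sub_cancel]

theorem coneExactAt_plusMap (hf : IsMixedHom f)
    (hcone : ∀ n, ConeExactAt M₁.δ M₂.δ f n) (n : ℤ) :
    ConeExactAt (plusD M₁) (plusD M₂) (plusMap f) n := by
  by_cases hn : n + 1 + 1 < 0
  · intro x y _ _
    have := subsingleton_plusC_of_neg M₁ hn
    have := subsingleton_plusC_of_neg M₂ (show n + 1 < 0 by omega)
    exact ⟨0, 0, Subsingleton.elim _ _, Subsingleton.elim _ _⟩
  · exact coneExactAt_plusMap_of_add_two hf (sub_add_cancel n 2) (hcone n)
      (coneExactAt_plusMap hf hcone (n - 2))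
termination_by (n + 3).toNat

end Plus

section Periodic

variable {κ : Type} [Field κ]

lemma lof_apply_of_val_eq (M : Mixed κ) {p : ℤ → Prop} {i j : {m : ℤ // p m}} (h : i.1 = j.1)
    (x : M.C i.1) :
    DirectSum.lof κ {m : ℤ // p m} (fun m => M.C m.1) i x j = fcast (κ := κ) h x := by
  obtain rfl : i = j := Subtype.ext h
  exact DirectSum.lof_apply κ (M := fun m : {m : ℤ // p m} => M.C m.1) i x

lemma lof_apply_of_val_ne (M : Mixed κ) {p : ℤ → Prop} {i j : {m : ℤ // p m}} (h : i.1 ≠ j.1)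
    (x : M.C i.1) : DirectSum.lof κ {m : ℤ // p m} (fun m => M.C m.1) i x j = 0 :=
  DirectSum.of_eq_of_ne (β := fun m : {m : ℤ // p m} => M.C m.1) i j x fun hji =>
    h (congrArg Subtype.val hji).symm

lemma pD_apply (M : Mixed κ) (r : ℤ) (w : pC M r) (n : {m : ℤ // m % 2 = (r + 1) % 2}) :
    pD M r w n =
      fcast (κ := κ) (by ring) (M.δ (n.1 - 1) (w ⟨n.1 - 1, by have := n.2; omega⟩)) +
        fcast (κ := κ) (by ring) (M.β (n.1 + 1) (w ⟨n.1 + 1, by have := n.2; omega⟩)) := by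
  induction w using DirectSum.induction_on with
  | zero => simp only [map_zero, DirectSum.zero_apply, add_zero]
  | add v w hv hw => simp only [map_add, DirectSum.add_apply, hv, hw]; abel
  | of m x =>
    rw [← DirectSum.lof_eq_of κ, pD, DirectSum.toModule_lof, LinearMap.add_apply,
      DirectSum.add_apply, LinearMap.comp_apply, LinearMap.comp_apply]
    congr 1
    · by_cases h : m.1 + 1 = n.1
      · rw [lof_apply_of_val_eq M h, lof_apply_of_val_eq M (eq_sub_of_add_eq h), δ_fcast,
          fcast_fcast]
      · rw [lof_apply_of_val_ne M h, lof_apply_of_val_ne M (mt eq_sub_iff_add_eq.1 h), map_zero,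
          map_zero]
    · by_cases h : m.1 - 1 = n.1
      · rw [lof_apply_of_val_eq M h, lof_apply_of_val_eq M (eq_add_of_sub_eq h), β_fcast,
          fcast_fcast]
      · rw [lof_apply_of_val_ne M h, lof_apply_of_val_ne M (mt sub_eq_iff_eq_add.2 h), map_zero,
          map_zero]

lemma reindexP_apply (M : Mixed κ) {a b : ℤ} (h : a % 2 = b % 2) (w : pC M a)
    (n : {m : ℤ // m % 2 = b % 2}) : reindexP M a b h w n = w ⟨n.1, n.2.trans h.symm⟩ := by
  induction w using DirectSum.induction_on with
  | zero => rw [map_zero]; rfl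
  | add v w hv hw => rw [map_add, DirectSum.add_apply, DirectSum.add_apply, hv, hw]
  | of m x =>
    rw [← DirectSum.lof_eq_of κ, reindexP, DirectSum.toModule_lof]
    by_cases hmn : m.1 = n.1
    · rw [lof_apply_of_val_eq M hmn, lof_apply_of_val_eq M hmn]
    · rw [lof_apply_of_val_ne M hmn, lof_apply_of_val_ne M hmn]

/-- The inclusion of `^+C^m` into the `2`-periodic complex, in any degree `r` of the parity
of `m`. -/
noncomputable def plusToP (M : Mixed κ) {m r : ℤ} (h : m % 2 = r % 2) : plusC M m →ₗ[κ] pC M r :=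
  (reindexP M m r h).comp (inclPlusP M m)

lemma plusToP_apply_eq_sum (M : Mixed κ) {m r : ℤ} (h : m % 2 = r % 2) (w : plusC M m)
    (n : {n : ℤ // n % 2 = r % 2}) :
    plusToP M h w n = ∑ j ∈ Finset.range (m.toNat + 1),
      DirectSum.lof κ {x : ℤ // x % 2 = m % 2} (fun x => M.C x.1) ⟨m - 2 * (j : ℤ), by omega⟩ (w j)
        ⟨n.1, n.2.trans h.symm⟩ := by
  rw [plusToP, LinearMap.comp_apply, reindexP_apply, inclPlusP, LinearMap.sum_apply]
  exact DFinsupp.finsetSum_apply _ _ _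

lemma plusToP_apply (M : Mixed κ) {m r : ℤ} (h : m % 2 = r % 2) (w : plusC M m) (k : ℕ)
    (n : {n : ℤ // n % 2 = r % 2}) (hn : m - 2 * (k : ℤ) = n) :
    plusToP M h w n = fcast (κ := κ) hn (w k) := by
  rw [plusToP_apply_eq_sum, Finset.sum_eq_single k]
  · exact lof_apply_of_val_eq M hn _
  · exact fun j _ hj => lof_apply_of_val_ne M (by dsimp only; omega) _
  · intro hk
    rw [Finset.mem_range] at hk
    have := M.trivNeg (m - 2 * (k : ℤ)) (by omega)
    rw [Subsingleton.elim (w k) 0, map_zero, DirectSum.zero_apply]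

lemma plusToP_apply_of_lt (M : Mixed κ) {m r : ℤ} (h : m % 2 = r % 2) (w : plusC M m)
    (n : {n : ℤ // n % 2 = r % 2}) (hn : m < n) : plusToP M h w n = 0 := by
  rw [plusToP_apply_eq_sum]
  exact Finset.sum_eq_zero fun j _ => lof_apply_of_val_ne M (by dsimp only; omega) _

lemma plusToP_injective (M : Mixed κ) {m r : ℤ} (h : m % 2 = r % 2) :
    Function.Injective (plusToP M h) := by
  intro v w hvw
  funext k
  have hk := DFunLike.congr_fun hvw ⟨m - 2 * (k : ℤ), by omega⟩
  rwa [plusToP_apply M h v k _ rfl, plusToP_apply M h w k _ rfl] at hk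

lemma exists_forall_ge_exists_plusToP_eq (M : Mixed κ) {r : ℤ} (w : pC M r) :
    ∃ N : ℤ, ∀ m ≥ N, ∀ h : m % 2 = r % 2, ∃ v, plusToP M h v = w := by
  classical
  obtain ⟨N, hN⟩ := (w.support.image Subtype.val).bddAbove
  refine ⟨N, fun m hm h => ⟨fun k => w ⟨m - 2 * (k : ℤ), by omega⟩,
    DFinsupp.ext fun ⟨n, hn⟩ => ?_⟩⟩
  rcases lt_or_ge m n with hmn | hmn
  · have n_notMem : (⟨n, hn⟩ : {x : ℤ // x % 2 = r % 2}) ∉ w.support := fun hmem =>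
      (hm.trans_lt hmn).not_ge (hN (Finset.mem_image_of_mem Subtype.val hmem))
    rw [DFinsupp.notMem_support_iff.1 n_notMem]
    exact plusToP_apply_of_lt M h _ _ hmn
  · obtain ⟨k, rfl⟩ : ∃ k : ℕ, n = m - 2 * (k : ℤ) := ⟨((m - n) / 2).toNat, by omega⟩
    exact plusToP_apply M h _ k _ rfl

lemma pD_plusToP (M : Mixed κ) {m r : ℤ} (h : m % 2 = r % 2) (w : plusC M m) :
    pD M r (plusToP M h w) = plusToP M (m := m + 1) (r := r + 1) (by omega) (plusD M m w) := by
  refine DFinsupp.ext fun ⟨n, hn⟩ => (pD_apply M r _ _).trans ?_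
  rcases lt_or_ge (m + 1) n with hmn | hmn
  · rw [plusToP_apply_of_lt M h w _ (by dsimp only; omega),
      plusToP_apply_of_lt M h w _ (by dsimp only; omega), plusToP_apply_of_lt M _ _ _ hmn]
    simp only [map_zero, add_zero]
  · obtain ⟨k, hk⟩ : ∃ k : ℕ, m + 1 - 2 * (k : ℤ) = n := ⟨((m + 1 - n) / 2).toNat, by omega⟩
    rw [plusToP_apply M _ _ k ⟨n, hn⟩ hk, plusToP_apply M h w k _ (by dsimp only; omega)]
    cases k with
    | zero =>
      rw [plusToP_apply_of_lt M h w _ (by dsimp only; omega), plusD_apply_zero]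
      simp only [δ_fcast, fcast_fcast, map_zero, add_zero]
    | succ k =>
      rw [plusToP_apply M h w k _ (by dsimp only; omega), plusD_apply_succ]
      simp only [δ_fcast, β_fcast, fcast_fcast, map_add]

variable {M₁ M₂ : Mixed κ} {f : ∀ n : ℤ, M₁.C n →ₗ[κ] M₂.C n}

lemma pMap_apply (r : ℤ) (w : pC M₁ r) (n : {m : ℤ // m % 2 = r % 2}) :
    pMap f r w n = f n.1 (w n) := by
  induction w using DirectSum.induction_on with
  | zero => simp only [map_zero, DirectSum.zero_apply]
  | add v w hv hw => simp only [map_add, DirectSum.add_apply, hv, hw]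
  | of m x =>
    rw [← DirectSum.lof_eq_of κ, pMap, DirectSum.toModule_lof, LinearMap.comp_apply]
    by_cases hmn : m.1 = n.1
    · rw [lof_apply_of_val_eq M₂ hmn, lof_apply_of_val_eq M₁ hmn, map_fcast]
    · rw [lof_apply_of_val_ne M₂ hmn, lof_apply_of_val_ne M₁ hmn, map_zero]

lemma pMap_plusToP {m r : ℤ} (h : m % 2 = r % 2) (w : plusC M₁ m) :
    pMap f r (plusToP M₁ h w) = plusToP M₂ h (plusMap f m w) := by
  refine DFinsupp.ext fun ⟨n, hn⟩ => (pMap_apply r _ _).trans ?_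
  rcases lt_or_ge m n with hmn | hmn
  · rw [plusToP_apply_of_lt M₁ h _ _ hmn, plusToP_apply_of_lt M₂ h _ _ hmn, map_zero]
  · obtain ⟨k, rfl⟩ : ∃ k : ℕ, n = m - 2 * (k : ℤ) := ⟨((m - n) / 2).toNat, by omega⟩
    rw [plusToP_apply M₁ h _ k _ rfl, plusToP_apply M₂ h _ k _ rfl]
    rfl

lemma pD_pMap (hf : IsMixedHom f) (r : ℤ) (w : pC M₁ r) :
    pD M₂ r (pMap f r w) = pMap f (r + 1) (pD M₁ r w) := by
  refine DFinsupp.ext fun n => (pD_apply M₂ r _ n).trans ((pMap_apply _ _ n).trans ?_).symm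
  simp only [pD_apply, pMap_apply, hf.map_δ, hf.map_β, map_add, map_fcast]

theorem coneExactAt_pMap (hplus : ∀ n, ConeExactAt (plusD M₁) (plusD M₂) (plusMap f) n) (n : ℤ) :
    ConeExactAt (pD M₁) (pD M₂) (pMap f) n := by
  intro x y hx hxy
  obtain ⟨N₁, hN₁⟩ := exists_forall_ge_exists_plusToP_eq M₁ x
  obtain ⟨N₂, hN₂⟩ := exists_forall_ge_exists_plusToP_eq M₂ y
  obtain ⟨m, hm, hm₁, hm₂⟩ : ∃ m : ℤ, m % 2 = n % 2 ∧ N₁ ≤ m + 1 + 1 ∧ N₂ ≤ m + 1 :=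
    ⟨n + 2 * ((N₁ - n).toNat + (N₂ - n).toNat), by omega, by omega, by omega⟩
  obtain ⟨x, rfl⟩ := hN₁ (m + 1 + 1) hm₁ (by omega)
  obtain ⟨y, rfl⟩ := hN₂ (m + 1) hm₂ (by omega)
  obtain ⟨x', y', rfl, rfl⟩ := hplus m x y
    (plusToP_injective M₁ (r := n + 1 + 1 + 1) (by omega)
      (by rw [← pD_plusToP M₁ (by omega), hx, map_zero]))
    (plusToP_injective M₂ (r := n + 1 + 1) (by omega)
      (by rw [← pMap_plusToP (by omega), hxy, pD_plusToP]))
  exact ⟨plusToP M₁ (by omega) x', plusToP M₂ hm y', pD_plusToP M₁ _ x',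
    by rw [pMap_plusToP, pD_plusToP, ← map_add]⟩

end Periodic

/-- if a morphism of mixed complexes induces an isomorphism on the
cohomology `H^n(C, δ)` for every `n`, then it induces isomorphisms on `^+H^r_β`
and on `PH^r` for every `r`. -/
theorem statement2 (κ : Type) [Field κ] (M₁ M₂ : Mixed κ)
    (f : ∀ n : ℤ, M₁.C n →ₗ[κ] M₂.C n)
    (hδ : ∀ (n : ℤ) (x : M₁.C n), M₂.δ n (f n x) = f (n + 1) (M₁.δ n x))
    (hβ : ∀ (n : ℤ) (x : M₁.C n), M₂.β n (f n x) = f (n - 1) (M₁.β n x))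
    (hiso : ∀ n : ℤ, Function.Bijective (Hmap₂ M₁.δ M₂.δ n n (f n))) :
    (∀ r : ℤ, Function.Bijective (Hmap₂ (plusD M₁) (plusD M₂) r r (plusMap f r))) ∧
    (∀ r : ℤ, Function.Bijective (Hmap₂ (pD M₁) (pD M₂) r r (pMap f r))) := by
  have hf : IsMixedHom f := ⟨hδ, hβ⟩
  have hcone : ∀ n, ConeExactAt M₁.δ M₂.δ f n := (forall_bijective_Hmap₂_iff hδ).1 hiso
  have hplus := coneExactAt_plusMap hf hcone
  exact ⟨(forall_bijective_Hmap₂_iff (plusD_plusMap hf)).2 hplus,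
    (forall_bijective_Hmap₂_iff (pD_pMap hf)).2 (coneExactAt_pMap hplus)⟩

end CDGA
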